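/- Let μ^a, μ^b ∈ [0,1]^m with OptEnvy ≤ −Δ for some Δ > 0, and let q ≥ 1 satisfy q ≤ (1/2) m³/Δ² and q ≤ m²/(log m)². In the thresholding allocation model (with estimate variance m/q), with probability at least 1 − 2 m⁶ exp(−(3/10)(log m)²), it holds simultaneously for all c in the grid C = {k/m³ : k = 1, …, m⁶} that f(c) ≤ −(1/5) m^{−3/2} q^{1/2} Δ² + (m/√q)·log m. -/

import Mathlib

open MeasureTheory ProbabilityTheory Real Filter
open scoped ENNReal NNReal Classical

noncomputable section

def envyAB {m : ℕ} (μa : Fin m → ℝ) (A : Finset (Fin m)) : ℝ :=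
  ∑ i ∈ Aᶜ, μa i - ∑ i ∈ A, μa i

def envyBA {m : ℕ} (μb : Fin m → ℝ) (A : Finset (Fin m)) : ℝ :=
  ∑ i ∈ A, μb i - ∑ i ∈ Aᶜ, μb i

def envy {m : ℕ} (μa μb : Fin m → ℝ) (A : Finset (Fin m)) : ℝ :=
  max (envyAB μa A) (envyBA μb A)

def optEnvy {m : ℕ} (μa μb : Fin m → ℝ) : ℝ :=
  ⨅ A : Finset (Fin m), envy μa μb A

/-- The joint law of the `2m` independent Gaussian estimates in the thresholding allocation
model: `ω (i, true) = v^a_i ~ N(μ^a_i, m/q)` and `ω (i, false) = v^b_i ~ N(μ^b_i, m/q)`. -/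
def threshMeasure (m q : ℕ) (μa μb : Fin m → ℝ) : Measure ((Fin m × Bool) → ℝ) :=
  Measure.pi fun p => gaussianReal (if p.2 then μa p.1 else μb p.1) ((m : ℝ≥0) / (q : ℝ≥0))

/-- `x_i(c) = 1` if `c v^a_i − v^b_i > 0` and `x_i(c) = −1` otherwise. -/
def xSign {m : ℕ} (c : ℝ) (ω : (Fin m × Bool) → ℝ) (i : Fin m) : ℝ :=
  if 0 < c * ω (i, true) - ω (i, false) then 1 else -1

/-- `e_a(c) = −∑ i x_i(c) μ^a_i`. -/
def eA {m : ℕ} (μa : Fin m → ℝ) (c : ℝ) (ω : (Fin m × Bool) → ℝ) : ℝ :=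
  -∑ i, xSign c ω i * μa i

/-- `e_b(c) = ∑ i x_i(c) μ^b_i`. -/
def eB {m : ℕ} (μb : Fin m → ℝ) (c : ℝ) (ω : (Fin m × Bool) → ℝ) : ℝ :=
  ∑ i, xSign c ω i * μb i

/-- `f(c) = (c e_a(c) + e_b(c))/(1+c)`. -/
def fFun {m : ℕ} (μa μb : Fin m → ℝ) (c : ℝ) (ω : (Fin m × Bool) → ℝ) : ℝ :=
  (c * eA μa c ω + eB μb c ω) / (1 + c)

/-- `e'_a(c) = −∑ i x_i(c) v^a_i`. -/
def eA' {m : ℕ} (c : ℝ) (ω : (Fin m × Bool) → ℝ) : ℝ :=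
  -∑ i, xSign c ω i * ω (i, true)

/-- `e'_b(c) = ∑ i x_i(c) v^b_i`. -/
def eB' {m : ℕ} (c : ℝ) (ω : (Fin m × Bool) → ℝ) : ℝ :=
  ∑ i, xSign c ω i * ω (i, false)

lemma aux_exp {x : ℝ} (hx : |x| ≤ 1) : Real.exp x ≤ 1 + x + 4/5 * x^2 := by
  have h := Real.exp_bound hx (n := 3) (by norm_num)
  have h2 := (abs_le.mp h).2
  simp [Finset.sum_range_succ, Nat.factorial] at h2
  have h3 : |x|^3 ≤ x^2 := by
    have : |x|^3 = |x| * x^2 := by rw [← sq_abs x]; ring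
    rw [this]; nlinarith [sq_nonneg x]
  nlinarith

lemma aux_twopoint {p b l : ℝ} (hp0 : 0 ≤ p) (hp1 : p ≤ 1) (hb0 : 0 ≤ b) (hb1 : b ≤ 1)
    (hl0 : 0 ≤ l) (hl1 : l ≤ 1/2) :
    p * Real.exp (l * b) + (1 - p) * Real.exp (-(l * b)) ≤
      Real.exp (-(l * b * (1 - 2 * p)) + 4/5 * l^2 * (4 * p * b^2)) := by
  have hlb : l * b ≤ 1/2 := by nlinarith
  have hlb0 : 0 ≤ l * b := by positivity
  have e1 : Real.exp (l * b) = Real.exp (-(l * b * (1 - 2 * p))) * Real.exp (2 * (l*b) * (1-p)) := by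
    rw [← Real.exp_add]; congr 1; ring
  have e2 : Real.exp (-(l * b)) = Real.exp (-(l * b * (1 - 2 * p))) * Real.exp (-(2 * (l*b) * p)) := by
    rw [← Real.exp_add]; congr 1; ring
  have h1 := aux_exp (x := 2 * (l*b) * (1-p)) (by rw [abs_of_nonneg (by nlinarith)]; nlinarith)
  have h2 := aux_exp (x := -(2 * (l*b) * p)) (by rw [abs_neg, abs_of_nonneg (by positivity)]; nlinarith)
  rw [Real.exp_add, e1, e2]
  have h3 : p * Real.exp (2 * (l*b) * (1-p)) + (1-p) * Real.exp (-(2 * (l*b) * p)) ≤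
      Real.exp (4/5 * l^2 * (4 * p * b^2)) := by
    calc _ ≤ p * (1 + 2 * (l*b) * (1-p) + 4/5 * (2 * (l*b) * (1-p))^2)
        + (1-p) * (1 + -(2 * (l*b) * p) + 4/5 * (-(2 * (l*b) * p))^2) := by
          have : 0 ≤ 1 - p := by linarith
          gcongr
      _ = 1 + 4/5 * 4 * (l*b)^2 * p * (1-p) := by ring
      _ ≤ 4/5 * l^2 * (4 * p * b^2) + 1 := by
          have : 0 ≤ (l*b)^2 * p * p := by positivity
          nlinarith
      _ ≤ _ := Real.add_one_le_exp _
  have h0 := Real.exp_pos (-(l * b * (1 - 2 * p)))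
  nlinarith

lemma aux_real (s : Set ℝ) : (gaussianReal 0 1).real s = ∫ x in s, gaussianPDFReal 0 1 x := by
  rw [Measure.real, gaussianReal_apply_eq_integral _ one_ne_zero, ENNReal.toReal_ofReal]
  exact integral_nonneg (fun x => gaussianPDFReal_nonneg _ _ _)

lemma aux_pdf (x : ℝ) : gaussianPDFReal 0 1 x = (√(2 * π))⁻¹ * Real.exp (-x^2/2) := by
  simp [gaussianPDFReal]

lemma aux_pdf_ge {x : ℝ} (hx : |x| ≤ 1) : 1/5 ≤ gaussianPDFReal 0 1 x := by
  rw [aux_pdf]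
  have h1 : √(2 * π) ≤ 5/2 + 1/100 := by
    rw [Real.sqrt_le_left (by norm_num)]
    have := Real.pi_lt_d2
    nlinarith
  have h2 : Real.exp (-1/2) ≤ Real.exp (-x^2/2) := by
    apply Real.exp_le_exp.mpr
    have := (sq_le_one_iff_abs_le_one x).mpr hx
    linarith
  have h3 : (1/2 : ℝ) + 1/100 ≤ Real.exp (-1/2) := by
    have := Real.exp_one_lt_d9
    have h : Real.exp (-1/2) ^ 2 * Real.exp 1 = 1 := by
      rw [← Real.exp_nat_mul, ← Real.exp_add]; norm_num
    by_contra hc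
    push Not at hc
    have h0 := Real.exp_pos (-1/2)
    have : Real.exp (-1/2) ^ 2 ≤ (0.51)^2 := by
      apply pow_le_pow_left₀ h0.le; linarith
    nlinarith [Real.exp_pos 1]
  have h0 : 0 < √(2 * π) := by positivity
  rw [inv_mul_eq_div, le_div_iff₀ h0]
  linarith

lemma aux_Q1 {t : ℝ} (ht : 0 ≤ t) :
    (gaussianReal 0 1).real (Set.Ici t) ≤ 1/2 - 1/5 * min t 1 := by
  have : NullSingletonClass (gaussianReal 0 1) := nullSingletonClass_gaussianReal one_ne_zero
  have e1 : (gaussianReal 0 1).real (Set.Ici t) = (gaussianReal 0 1).real (Set.Ioi t) :=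
    (measureReal_congr Ioi_ae_eq_Ici).symm
  have e2 : (gaussianReal 0 1).real (Set.Iio (-t)) = (gaussianReal 0 1).real (Set.Ioi t) := by
    conv_rhs => rw [← neg_zero, ← gaussianReal_map_neg]
    rw [map_measureReal_apply (by fun_prop) measurableSet_Ioi]
    congr 1
    ext x
    simp
  have hs0 : 0 ≤ min t 1 := le_min ht zero_le_one
  have e3 : 2/5 * min t 1 ≤ (gaussianReal 0 1).real (Set.Icc (-t) t) := by
    calc 2/5 * min t 1 = ∫ x in Set.Icc (-min t 1) (min t 1), (1/5 : ℝ) := by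
          simp
          rw [max_eq_left (by linarith)]; ring
      _ ≤ ∫ x in Set.Icc (-min t 1) (min t 1), gaussianPDFReal 0 1 x := by
          apply setIntegral_mono_on
          · simp
          · exact (integrable_gaussianPDFReal _ _).integrableOn
          · exact measurableSet_Icc
          · intro x hx
            apply aux_pdf_ge
            exact (abs_le.mpr hx).trans (min_le_right _ _)
      _ = (gaussianReal 0 1).real (Set.Icc (-min t 1) (min t 1)) := (aux_real _).symm
      _ ≤ _ := by
          apply measureReal_mono _ (measure_ne_top _ _)
          apply Set.Icc_subset_Icc <;> simp
  have e4 : (gaussianReal 0 1).real (Set.Iio (-t)) + (gaussianReal 0 1).real (Set.Icc (-t) t)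
      + (gaussianReal 0 1).real (Set.Ioi t) = 1 := by
    rw [← measureReal_union _ measurableSet_Icc, ← measureReal_union _ measurableSet_Ioi]
    · have : Set.Iio (-t) ∪ Set.Icc (-t) t ∪ Set.Ioi t = Set.univ := by
        ext x; simp; grind
      rw [this]; simp
    · rw [Set.disjoint_left]; intro x; simp; grind
    · rw [Set.disjoint_left]; intro x; simp; grind
  linarith

lemma aux_Q2 {t : ℝ} (ht : 0 ≤ t) :
    4 * t^2 * (gaussianReal 0 1).real (Set.Ici t) ≤ 1 := by
  have : NullSingletonClass (gaussianReal 0 1) := nullSingletonClass_gaussianReal one_ne_zero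
  have e1 : (gaussianReal 0 1).real (Set.Ici t) = (gaussianReal 0 1).real (Set.Ioi t) :=
    (measureReal_congr Ioi_ae_eq_Ici).symm
  have hd : ∀ x ∈ Set.Ici t, HasDerivAt (fun x => -gaussianPDFReal 0 1 x)
      (x * gaussianPDFReal 0 1 x) x := by
    intro x _
    simp only [aux_pdf]
    have h1 : HasDerivAt (fun x : ℝ => -x^2/2) (-x) x := by
      have := ((hasDerivAt_pow 2 x).neg).div_const 2
      have e : -x = -(((2:ℕ):ℝ) * x ^ (2-1)) / 2 := by norm_num; ring
      rw [e]
      exact this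
    have e : x * ((√(2 * π))⁻¹ * Real.exp (-x^2/2)) =
        -((√(2*π))⁻¹ * (Real.exp (-x^2/2) * (-x))) := by ring
    rw [e]
    exact (h1.exp.const_mul (√(2*π))⁻¹).neg
  have hpos : ∀ x ∈ Set.Ioi t, 0 ≤ x * gaussianPDFReal 0 1 x := fun x hx =>
    mul_nonneg (ht.trans (le_of_lt hx)) (gaussianPDFReal_nonneg _ _ _)
  have hlim : Tendsto (fun x => -gaussianPDFReal 0 1 x) atTop (nhds 0) := by
    simp only [aux_pdf]
    have h : Tendsto (fun x : ℝ => Real.exp (-x^2/2)) atTop (nhds 0) := by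
      apply Real.tendsto_exp_atBot.comp
      have : Tendsto (fun x : ℝ => x^2/2) atTop atTop :=
        (tendsto_pow_atTop two_ne_zero).atTop_div_const (by norm_num)
      have e : (fun x : ℝ => -x^2/2) = Neg.neg ∘ (fun x : ℝ => x^2/2) := by
        ext x; simp [neg_div]
      rw [e]
      exact tendsto_neg_atTop_atBot.comp this
    simpa using (h.const_mul (√(2*π))⁻¹).neg
  have hint := integral_Ioi_of_hasDerivAt_of_nonneg' hd hpos hlim
  have hI := integrableOn_Ioi_deriv_of_nonneg' hd hpos hlim
  have h1 : t * (gaussianReal 0 1).real (Set.Ioi t) ≤ gaussianPDFReal 0 1 t := by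
    rw [aux_real, ← integral_const_mul]
    calc _ ≤ ∫ x in Set.Ioi t, x * gaussianPDFReal 0 1 x := by
          apply setIntegral_mono_on _ hI measurableSet_Ioi
          · intro x hx
            exact mul_le_mul_of_nonneg_right (le_of_lt hx) (gaussianPDFReal_nonneg _ _ _)
          · exact ((integrable_gaussianPDFReal _ _).const_mul _).integrableOn
      _ = _ := by rw [hint]; ring
  have h2 : 4 * t * gaussianPDFReal 0 1 t ≤ 1 := by
    rw [aux_pdf]
    have h0 : 0 < √(2 * π) := by positivity
    have hA : (4 * t * Real.exp (-t^2/2))^2 ≤ (√(2*π))^2 := by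
      rw [Real.sq_sqrt (by positivity)]
      have a1 : Real.exp (-t^2/2)^2 = Real.exp (-t^2) := by
        rw [← Real.exp_nat_mul]; congr 1; push_cast; ring
      rw [mul_pow, a1]
      have a2 : t^2 * Real.exp 1 ≤ Real.exp (t^2) := by
        have := Real.add_one_le_exp (t^2 - 1)
        have e : Real.exp (t^2) = Real.exp (t^2-1) * Real.exp 1 := by
          rw [← Real.exp_add]; congr 1; ring
        rw [e]
        apply mul_le_mul_of_nonneg_right _ (Real.exp_pos 1).le
        linarith
      rw [Real.exp_neg, ← div_eq_mul_inv, div_le_iff₀ (Real.exp_pos _)]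
      have := Real.pi_gt_d2
      have h3 := Real.exp_one_gt_d9
      have : (8:ℝ) ≤ π * Real.exp 1 := by nlinarith
      nlinarith [sq_nonneg t, Real.pi_pos, Real.exp_pos 1]
    have hB := abs_le_of_sq_le_sq hA h0.le
    have hC : 4 * t * ((√(2 * π))⁻¹ * Real.exp (-t^2/2)) = (4 * t * Real.exp (-t^2/2)) / √(2 * π) := by
      field_simp
    rw [hC, div_le_one h0]
    exact (le_abs_self _).trans hB
  rw [e1]
  nlinarith

lemma aux_tail {Ω : Type*} [MeasurableSpace Ω] {P : Measure Ω} [IsProbabilityMeasure P]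
    {V : Ω → ℝ} (hV : Measurable V) {d σ : ℝ} (hσ : 0 < σ) {v : ℝ≥0} (hv : (v : ℝ) = σ^2)
    (hlaw : P.map V = gaussianReal d v) :
    P.real {ω | (0 < V ω ∧ d < 0) ∨ (V ω ≤ 0 ∧ 0 ≤ d)} ≤
      (gaussianReal 0 1).real (Set.Ici (|d| / σ)) := by
  have hv1 : v / (.mk (σ^2) (sq_nonneg σ) : ℝ≥0) = 1 := by
    ext
    simp only [NNReal.coe_div, NNReal.coe_mk, NNReal.coe_one]
    rw [hv]; field_simp
  have h1 : P.map (fun ω => (V ω - d) / σ) = gaussianReal 0 1 := by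
    have e : (fun ω => (V ω - d) / σ) = (fun x => x / σ) ∘ (fun x => x - d) ∘ V := rfl
    rw [e, ← Measure.map_map (by fun_prop) (by fun_prop), ← Measure.map_map (by fun_prop) hV, hlaw,
      gaussianReal_map_sub_const, gaussianReal_map_div_const, hv1]
    simp
  have h2 : P.map (fun ω => (d - V ω) / σ) = gaussianReal 0 1 := by
    have e : (fun ω => (d - V ω) / σ) = (fun x => x / σ) ∘ (fun x => d - x) ∘ V := rfl
    rw [e, ← Measure.map_map (by fun_prop) (by fun_prop), ← Measure.map_map (by fun_prop) hV, hlaw,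
      gaussianReal_map_const_sub, gaussianReal_map_div_const, hv1]
    simp
  rcases lt_or_ge d 0 with hd | hd
  · rw [← h1, map_measureReal_apply (by fun_prop) measurableSet_Ici]
    apply measureReal_mono _ (measure_ne_top _ _)
    intro ω hω
    simp only [Set.mem_ofPred_eq, Set.mem_preimage, Set.mem_Ici] at hω ⊢
    rw [abs_of_neg hd]
    apply div_le_div_of_nonneg_right _ hσ.le
    rcases hω with h | h <;> linarith
  · rw [← h2, map_measureReal_apply (by fun_prop) measurableSet_Ici]
    apply measureReal_mono _ (measure_ne_top _ _)
    intro ω hω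
    simp only [Set.mem_ofPred_eq, Set.mem_preimage, Set.mem_Ici] at hω ⊢
    rw [abs_of_nonneg hd]
    apply div_le_div_of_nonneg_right _ hσ.le
    rcases hω with h | h <;> linarith

lemma aux_mgf {Ω : Type*} [MeasurableSpace Ω] {P : Measure Ω} [IsProbabilityMeasure P]
    {V : Ω → ℝ} (hV : Measurable V) {d σ K l s : ℝ} (hσ : 0 < σ) {v : ℝ≥0} (hv : (v : ℝ) = σ^2)
    (hlaw : P.map V = gaussianReal d v) (hK : 0 < K) (hKd : K * |d| ≤ 1)
    (hl0 : 0 ≤ l) (hl1 : l ≤ 1/2) (hs1 : s ≤ 1) :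
    mgf (fun ω => -((if 0 < V ω then (1:ℝ) else -1) * d * K)) P l ≤
      Real.exp (-(l * K * (1/5) * (2 * s * |d| - σ * s^2)) + 4/5 * l^2 * (K^2 * σ^2)) := by
  set B := {ω | (0 < V ω ∧ d < 0) ∨ (V ω ≤ 0 ∧ 0 ≤ d)} with hB
  have hBm : MeasurableSet B := by
    apply MeasurableSet.union
    · exact (measurableSet_lt measurable_const hV).inter (MeasurableSet.const _)
    · exact (measurableSet_le hV measurable_const).inter (MeasurableSet.const _)
  have ht := aux_tail (P := P) hV hσ hv hlaw
  set t := |d| / σ with htd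
  have ht0 : 0 ≤ t := by positivity
  have hdt : |d| = t * σ := by rw [htd]; field_simp
  set p := P.real B with hp
  have hp0 : 0 ≤ p := measureReal_nonneg
  have hp1 : p ≤ 1 := measureReal_le_one
  have q1 := aux_Q1 ht0
  have q2 := aux_Q2 ht0
  have hmgf : mgf (fun ω => -((if 0 < V ω then (1:ℝ) else -1) * d * K)) P l =
      p * Real.exp (l * (K * |d|)) + (1 - p) * Real.exp (-(l * (K * |d|))) := by
    unfold mgf
    have e : (fun ω => Real.exp (l * -((if 0 < V ω then (1:ℝ) else -1) * d * K))) =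
        fun ω => B.indicator (fun _ => Real.exp (l * (K * |d|))) ω +
          Bᶜ.indicator (fun _ => Real.exp (-(l * (K * |d|)))) ω := by
      ext ω
      by_cases hω : ω ∈ B
      · rw [Set.indicator_of_mem hω, Set.indicator_of_notMem (by simpa using hω), add_zero]
        congr 1
        rcases hω with ⟨h1, h2⟩ | ⟨h1, h2⟩
        · rw [if_pos h1, abs_of_neg h2]; ring
        · rw [if_neg (not_lt.mpr h1), abs_of_nonneg h2]; ring
      · rw [Set.indicator_of_notMem hω, Set.indicator_of_mem (by simpa using hω), zero_add]
        congr 1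
        rcases lt_or_ge d 0 with h2 | h2
        · rw [if_neg (fun h1 => hω (Or.inl ⟨h1, h2⟩)), abs_of_neg h2]; ring
        · rw [if_pos (by by_contra h1; exact hω (Or.inr ⟨not_lt.mp h1, h2⟩)), abs_of_nonneg h2]
          ring
    rw [e, integral_add ((integrable_const _).indicator hBm)
      ((integrable_const _).indicator hBm.compl), integral_indicator_const _ hBm,
      integral_indicator_const _ hBm.compl, probReal_compl_eq_one_sub hBm]
    simp [hp]
  rw [hmgf]
  refine (aux_twopoint hp0 hp1 (by positivity) hKd hl0 hl1).trans ?_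
  apply Real.exp_le_exp.mpr
  have hvar : 4 * p * (K * |d|)^2 ≤ K^2 * σ^2 := by
    rw [hdt]
    have : 4 * t^2 * p ≤ 1 := by nlinarith [sq_nonneg t]
    have h0 : 0 ≤ K^2 * σ^2 := by positivity
    nlinarith
  have hmean : 1/5 * (2 * s * t - s^2) ≤ t * (1 - 2 * p) := by
    have h1 : 2/5 * min t 1 ≤ 1 - 2 * p := by linarith
    have h2 : t * (2/5 * min t 1) ≤ t * (1 - 2 * p) := mul_le_mul_of_nonneg_left h1 ht0
    refine le_trans ?_ h2
    rcases le_total t 1 with h | h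
    · rw [min_eq_left h]; nlinarith [sq_nonneg (t - s), sq_nonneg t]
    · rw [min_eq_right h]; nlinarith [sq_nonneg s]
  have h3 : l * K * (1/5) * (2 * s * |d| - σ * s^2) ≤ l * (K * |d|) * (1 - 2 * p) := by
    rw [hdt]
    have h0 : 0 ≤ l * K * σ := by positivity
    have := mul_le_mul_of_nonneg_left hmean h0
    nlinarith
  have h4 : 4/5 * l^2 * (4 * p * (K * |d|)^2) ≤ 4/5 * l^2 * (K^2 * σ^2) :=
    mul_le_mul_of_nonneg_left hvar (by positivity)
  linarith

lemma aux_indep {m : ℕ} (q : ℕ) (μa μb : Fin m → ℝ) :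
    iIndepFun (fun (i : Fin m) (ω : Fin m × Bool → ℝ) (j : Bool) => ω (i, j))
      (threshMeasure m q μa μb) := by
  have hP : threshMeasure m q μa μb = Measure.infinitePi (fun p : Fin m × Bool =>
      (fun (i : Fin m) (j : Bool) => gaussianReal (if j then μa i else μb i)
        ((m : ℝ≥0) / (q : ℝ≥0))) p.1 p.2) := by
    rw [Measure.infinitePi_eq_pi]; rfl
  have hc := Measure.infinitePi_map_curry (fun (i : Fin m) (j : Bool) =>
    gaussianReal (if j then μa i else μb i) ((m : ℝ≥0) / (q : ℝ≥0)))
  rw [← hP] at hc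
  have : IsProbabilityMeasure (threshMeasure m q μa μb) := by rw [hP]; infer_instance
  rw [iIndepFun_iff_map_fun_eq_infinitePi_map (by fun_prop)]
  have e1 : (fun (ω : Fin m × Bool → ℝ) (i : Fin m) (j : Bool) => ω (i, j)) =
    MeasurableEquiv.curry (Fin m) Bool ℝ := by
      ext; rfl
  rw [e1, hc]
  congr 1
  ext1 i
  have e2 : (fun (ω : Fin m × Bool → ℝ) (j : Bool) => ω (i, j)) =
    (fun f => f i) ∘ MeasurableEquiv.curry (Fin m) Bool ℝ := by
      ext; rfl
  rw [e2, ← Measure.map_map (by fun_prop) (by fun_prop), hc]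
  exact (Measure.infinitePi_map_eval (fun i : Fin m => Measure.infinitePi fun j : Bool =>
    gaussianReal (if j then μa i else μb i) ((m : ℝ≥0) / (q : ℝ≥0))) i).symm

lemma aux_law {m : ℕ} (q : ℕ) (μa μb : Fin m → ℝ) (c : ℝ) (i : Fin m) :
    (threshMeasure m q μa μb).map (fun ω => c * ω (i, true) - ω (i, false)) =
      gaussianReal (c * μa i - μb i) (.mk (c^2) (sq_nonneg c) * ((m : ℝ≥0) / (q : ℝ≥0))
        + (m : ℝ≥0) / (q : ℝ≥0)) := by
  have hev : ∀ p : Fin m × Bool, (threshMeasure m q μa μb).map (fun ω => ω p) =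
      gaussianReal (if p.2 then μa p.1 else μb p.1) ((m : ℝ≥0) / (q : ℝ≥0)) := by
    intro p
    exact (measurePreserving_eval (fun p : Fin m × Bool =>
      gaussianReal (if p.2 then μa p.1 else μb p.1) ((m : ℝ≥0) / (q : ℝ≥0))) p).map_eq
  have hind : iIndepFun (fun (p : Fin m × Bool) (ω : Fin m × Bool → ℝ) => ω p)
      (threshMeasure m q μa μb) :=
    iIndepFun_pi (X := fun _ x => x) (fun _ => aemeasurable_id)
  have h2 := (hind.indepFun (i := (i, true)) (j := (i, false)) (by simp)).comp
    (φ := fun x => c * x) (ψ := fun x => -x) (by fun_prop) (by fun_prop)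
  have h3 := gaussianReal_add_gaussianReal_of_indepFun h2
    (m₁ := c * μa i) (v₁ := .mk (c^2) (sq_nonneg c) * ((m : ℝ≥0) / (q : ℝ≥0)))
    (m₂ := - μb i) (v₂ := (m : ℝ≥0) / (q : ℝ≥0))
    (by rw [← Measure.map_map (by fun_prop) (by fun_prop), hev, gaussianReal_map_const_mul]; simp)
    (by rw [← Measure.map_map (by fun_prop) (by fun_prop), hev, gaussianReal_map_neg]; simp)
  rw [sub_eq_add_neg, ← h3]
  congr 1

lemma aux_fFun {m : ℕ} (μa μb : Fin m → ℝ) (c : ℝ) :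
    fFun μa μb c = ∑ i, fun ω => -((if 0 < c * ω (i, true) - ω (i, false) then (1:ℝ) else -1) *
      (c * μa i - μb i) * (1 / (1 + c))) := by
  ext ω
  unfold fFun eA eB
  rw [Finset.sum_apply, mul_neg, Finset.mul_sum, ← Finset.sum_neg_distrib,
    ← Finset.sum_add_distrib, Finset.sum_div]
  apply Finset.sum_congr rfl
  intro i _
  unfold xSign
  ring

lemma aux_sgn : Measurable (fun x : ℝ => if 0 < x then (1:ℝ) else -1) :=
  Measurable.ite measurableSet_Ioi measurable_const measurable_const

lemma aux_meas_term {m : ℕ} (μa μb : Fin m → ℝ) (c : ℝ) (i : Fin m) :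
    Measurable (fun ω : Fin m × Bool → ℝ =>
      -((if 0 < c * ω (i, true) - ω (i, false) then (1:ℝ) else -1) *
      (c * μa i - μb i) * (1 / (1 + c)))) := by
  have h : Measurable (fun ω : Fin m × Bool → ℝ => c * ω (i, true) - ω (i, false)) := by fun_prop
  exact (((aux_sgn.comp h).mul_const _).mul_const _).neg

lemma aux_meas {m : ℕ} (μa μb : Fin m → ℝ) (c : ℝ) : Measurable (fFun μa μb c) := by
  rw [aux_fFun, Finset.sum_fn]
  exact Finset.measurable_sum _ (fun i _ => aux_meas_term μa μb c i)

lemma aux_abs {m : ℕ} (μa μb : Fin m → ℝ) (Δ : ℝ) (hopt : optEnvy μa μb ≤ -Δ) (c : ℝ)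
    (hc : 0 < c) : (1 + c) * Δ ≤ ∑ i, |c * μa i - μb i| := by
  obtain ⟨A, hA⟩ := exists_eq_ciInf_of_finite (f := fun A : Finset (Fin m) => envy μa μb A)
  have h : envy μa μb A ≤ -Δ := by
    rw [hA]; exact hopt
  have h1 : envyAB μa A ≤ -Δ := (le_max_left _ _).trans h
  have h2 : envyBA μb A ≤ -Δ := (le_max_right _ _).trans h
  have h3 : (1 + c) * Δ ≤ -(c * envyAB μa A + envyBA μb A) := by nlinarith
  refine h3.trans ?_
  have h4 : -(c * envyAB μa A + envyBA μb A) =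
      ∑ i ∈ A, (c * μa i - μb i) + ∑ i ∈ Aᶜ, -(c * μa i - μb i) := by
    unfold envyAB envyBA
    rw [Finset.sum_neg_distrib, Finset.sum_sub_distrib, Finset.sum_sub_distrib,
      ← Finset.mul_sum, ← Finset.mul_sum]
    ring
  rw [h4, ← Finset.sum_add_sum_compl A (fun i => |c * μa i - μb i|)]
  apply add_le_add
  · exact Finset.sum_le_sum fun i _ => le_abs_self _
  · exact Finset.sum_le_sum fun i _ => neg_le_abs _

set_option maxHeartbeats 1000000 in
lemma aux_single {m : ℕ} (μa μb : Fin m → ℝ)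
    (hμa : ∀ i, μa i ∈ Set.Icc (0 : ℝ) 1) (hμb : ∀ i, μb i ∈ Set.Icc (0 : ℝ) 1)
    (Δ : ℝ) (hΔ : 0 < Δ) (hopt : optEnvy μa μb ≤ -Δ)
    (q : ℕ) (hq1 : 1 ≤ q) (hq2 : (q : ℝ) ≤ 1 / 2 * m ^ 3 / Δ ^ 2)
    (hq3 : (q : ℝ) ≤ m ^ 2 / Real.log m ^ 2) (hm2 : 2 ≤ m) (c : ℝ) (hc : 0 < c) :
    (threshMeasure m q μa μb).real
      {ω | -(1/5 * (√q * Δ^2 / (m * √m))) + (m / √q) * Real.log m ≤ fFun μa μb c ω} ≤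
      Real.exp (-(3 / 10) * Real.log m ^ 2) := by
  have hP : IsProbabilityMeasure (threshMeasure m q μa μb) := by
    unfold threshMeasure; infer_instance
  set P := threshMeasure m q μa μb with hPdef
  have hm : (0:ℝ) < m := by positivity
  have hq : (0:ℝ) < q := by positivity
  have hL : 0 < Real.log m := Real.log_pos (by exact_mod_cast hm2)
  set L := Real.log m with hLdef
  set r := √(q:ℝ) with hr
  have hr0 : 0 < r := Real.sqrt_pos.mpr hq
  have hr2 : r^2 = q := Real.sq_sqrt hq.le
  set w := √(m:ℝ) with hw
  have hw0 : 0 < w := Real.sqrt_pos.mpr hm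
  have hw2 : w^2 = m := Real.sq_sqrt hm.le
  set g := √(1 + c^2) with hg
  have hg0 : 0 < g := Real.sqrt_pos.mpr (by positivity)
  have hg2 : g^2 = 1 + c^2 := Real.sq_sqrt (by positivity)
  have hgc : g ≤ 1 + c := abs_le_of_sq_le_sq' (by nlinarith) (by positivity) |>.2
  set σ := g * w / r with hσ
  have hσ0 : 0 < σ := by positivity
  have hσ2 : σ^2 = (1 + c^2) * (m / q) := by
    rw [hσ, div_pow, mul_pow, hg2, hw2, hr2]; ring
  set K := 1 / (1 + c) with hK
  have hK0 : 0 < K := by positivity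
  set l := L * r / (2 * m) with hl
  have hl0 : 0 ≤ l := by positivity
  have hl1 : l ≤ 1/2 := by
    have h1 : (L * r)^2 ≤ (m:ℝ)^2 := by
      rw [mul_pow, hr2]
      rw [le_div_iff₀ (by positivity)] at hq3
      linarith
    have h2 : L * r ≤ m := (abs_le_of_sq_le_sq' h1 hm.le).2
    rw [hl, div_le_iff₀ (by positivity)]; linarith
  set s := (1 + c) * Δ / (m * σ) with hs
  have hs1 : s ≤ 1 := by
    rw [hs, div_le_one (by positivity)]
    have h1 : ((1 + c) * Δ)^2 ≤ (m * σ)^2 := by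
      rw [mul_pow, mul_pow, hσ2]
      have h2 : q * (2 * Δ^2) ≤ (m:ℝ)^3 := by
        rw [le_div_iff₀ (by positivity)] at hq2; linarith
      have h3 : 2 * Δ^2 ≤ (m:ℝ)^3 / q := by
        rw [le_div_iff₀ hq]; linarith
      calc (1+c)^2 * Δ^2 ≤ (2 * (1 + c^2)) * Δ^2 := by
            apply mul_le_mul_of_nonneg_right _ (sq_nonneg _); nlinarith [sq_nonneg (1-c)]
        _ = (1 + c^2) * (2 * Δ^2) := by ring
        _ ≤ (1 + c^2) * ((m:ℝ)^3 / q) := mul_le_mul_of_nonneg_left h3 (by positivity)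
        _ = _ := by ring
    exact (abs_le_of_sq_le_sq' h1 (by positivity)).2
  have hsm : s * (m * σ) = (1 + c) * Δ := by rw [hs]; field_simp
  have hs0 : 0 ≤ s := by positivity
  set d : Fin m → ℝ := fun i => c * μa i - μb i with hd
  have hKd : ∀ i, K * |d i| ≤ 1 := by
    intro i
    rw [hK, one_div, inv_mul_eq_div, div_le_one (by positivity), abs_le]
    have := hμa i; have := hμb i
    simp only [Set.mem_Icc, hd] at *
    constructor <;> nlinarith
  have hv : ((NNReal.mk (c^2) (sq_nonneg c) * ((m : ℝ≥0) / (q : ℝ≥0))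
        + (m : ℝ≥0) / (q : ℝ≥0) : ℝ≥0) : ℝ) = σ^2 := by
    rw [hσ2]
    simp only [NNReal.coe_add, NNReal.coe_mul, NNReal.coe_mk, NNReal.coe_div, NNReal.coe_natCast]
    ring
  have hterm : ∀ i, mgf (fun ω => -((if 0 < c * ω (i, true) - ω (i, false) then (1:ℝ) else -1) *
      (c * μa i - μb i) * (1 / (1 + c)))) P l ≤
      Real.exp (-(l * K * (1/5) * (2 * s * |d i| - σ * s^2)) + 4/5 * l^2 * (K^2 * σ^2)) := by
    intro i
    exact aux_mgf (P := P) (V := fun ω => c * ω (i, true) - ω (i, false)) (by fun_prop) hσ0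
      hv (aux_law q μa μb c i) hK0 (hKd i) hl0 hl1 hs1
  have hind : iIndepFun (fun (i : Fin m) (ω : Fin m × Bool → ℝ) =>
      -((if 0 < c * ω (i, true) - ω (i, false) then (1:ℝ) else -1) *
      (c * μa i - μb i) * (1 / (1 + c)))) P := by
    refine (aux_indep q μa μb).comp (fun i (u : Bool → ℝ) =>
      -((if 0 < c * u true - u false then (1:ℝ) else -1) *
      (c * μa i - μb i) * (1 / (1 + c)))) (fun i => ?_)
    have h : Measurable (fun u : Bool → ℝ => c * u true - u false) := by fun_prop
    exact (((aux_sgn.comp h).mul_const _).mul_const _).neg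
  have hmgf : mgf (fFun μa μb c) P l ≤ Real.exp (-(l * (1/5 * (r * Δ^2 / (m * w))))
      + 4/5 * l^2 * (m^2 / q)) := by
    rw [aux_fFun, hind.mgf_sum (fun i => aux_meas_term μa μb c i)]
    refine (Finset.prod_le_prod (fun i _ => mgf_nonneg) (fun i _ => hterm i)).trans ?_
    rw [← Real.exp_sum]
    apply Real.exp_le_exp.mpr
    have hsum : ∑ i, (-(l * K * (1/5) * (2 * s * |d i| - σ * s^2)) + 4/5 * l^2 * (K^2 * σ^2)) =
        -(l * K * (1/5) * (2 * s * (∑ i, |d i|) - m * (σ * s^2))) + m * (4/5 * l^2 * (K^2 * σ^2)) := by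
      rw [Finset.sum_add_distrib, Finset.sum_neg_distrib, ← Finset.mul_sum,
        Finset.sum_sub_distrib, ← Finset.mul_sum]
      simp
    rw [hsum]
    have hS : s * (m * σ) ≤ ∑ i, |d i| := by
      rw [hsm]; exact aux_abs μa μb Δ hopt c hc
    have hA : r * Δ^2 / (m * w) ≤ K * (2 * s * (∑ i, |d i|) - m * (σ * s^2)) := by
      have h1 : m * σ * s^2 ≤ 2 * s * (∑ i, |d i|) - m * (σ * s^2) := by
        have h0 := mul_le_mul_of_nonneg_left hS hs0
        have e : s * (s * (m * σ)) = m * (σ * s^2) := by ring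
        have e' : m * σ * s^2 = m * (σ * s^2) := by ring
        rw [e] at h0
        rw [e']
        linarith
      refine le_trans ?_ (mul_le_mul_of_nonneg_left h1 hK0.le)
      have h2 : K * (m * σ * s^2) = (1 + c) / g * (r * Δ^2 / (m * w)) := by
        rw [hK, hs, hσ]; field_simp
      rw [h2]
      have h3 : 1 ≤ (1 + c) / g := by rwa [one_le_div hg0]
      have h4 : 0 ≤ r * Δ^2 / (m * w) := by positivity
      nlinarith
    have hB : K^2 * σ^2 ≤ m / q := by
      rw [hσ2, ← mul_assoc]
      have h1 : K^2 * (1 + c^2) ≤ 1 := by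
        rw [hK, div_pow, one_pow, one_div, inv_mul_eq_div, div_le_one (by positivity)]
        nlinarith
      have h2 : (0:ℝ) ≤ m / q := by positivity
      nlinarith
    have hA' := mul_le_mul_of_nonneg_left hA (mul_nonneg hl0 (by norm_num : (0:ℝ) ≤ 1/5))
    have hB' := mul_le_mul_of_nonneg_left hB (by positivity : (0:ℝ) ≤ m * (4/5 * l^2))
    have e : (m:ℝ) * (4/5 * l^2) * (m / q) = 4/5 * l^2 * (m^2 / q) := by ring
    rw [e] at hB'
    have e2 : l * (1/5) * (K * (2 * s * (∑ i, |d i|) - m * (σ * s^2))) =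
      l * K * (1/5) * (2 * s * (∑ i, |d i|) - m * (σ * s^2)) := by ring
    have e3 : (m:ℝ) * (4/5 * l^2) * (K^2 * σ^2) = m * (4/5 * l^2 * (K^2 * σ^2)) := by ring
    rw [e2] at hA'
    rw [e3] at hB'
    linarith
  have hint : Integrable (fun ω => Real.exp (l * fFun μa μb c ω)) P := by
    have hb : ∀ ω, fFun μa μb c ω ≤ m := by
      intro ω
      rw [aux_fFun, Finset.sum_apply]
      calc _ ≤ ∑ i : Fin m, (1:ℝ) := by
            apply Finset.sum_le_sum
            intro i _
            have h1 := hKd i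
            have h2 : |K * d i| ≤ 1 := by rwa [abs_mul, abs_of_pos hK0]
            have h3 := abs_le.mp h2
            have e : (c * μa i - μb i) * (1 / (1 + c)) = K * d i := by rw [hK, hd]; ring
            rw [mul_assoc, e]
            split_ifs <;> linarith
        _ = m := by simp
    apply Integrable.of_bound (C := Real.exp (l * m))
    · exact (((aux_meas μa μb c).const_mul l).exp).aestronglyMeasurable
    · refine ae_of_all _ (fun ω => ?_)
      rw [Real.norm_eq_abs, abs_of_pos (Real.exp_pos _)]
      exact Real.exp_le_exp.mpr (mul_le_mul_of_nonneg_left (hb ω) hl0)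
  refine (measure_ge_le_exp_mul_mgf _ hl0 hint).trans ?_
  refine (mul_le_mul_of_nonneg_left hmgf (Real.exp_pos _).le).trans ?_
  rw [← Real.exp_add]
  apply le_of_eq
  congr 1
  have e1 : l * (m / r * L) = L^2 / 2 := by rw [hl]; field_simp
  have e2 : l^2 * (m^2 / q) = L^2/4 := by
    rw [hl, ← hr2]; field_simp; norm_num
  calc _ = - (l * (m / r * L)) + 4/5 * (l^2 * (m^2/q)) := by ring
    _ = _ := by rw [e1, e2]; ring

lemma aux_union {Ω : Type*} [MeasurableSpace Ω] (P : Measure Ω) [IsProbabilityMeasure P]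
    (F : ℕ → Ω → ℝ) (hF : ∀ k, Measurable (F k)) (N : ℕ) (T b : ℝ)
    (hb : ∀ k, 1 ≤ k → P.real {ω | T ≤ F k ω} ≤ b) :
    1 - N * b ≤ P.real {ω | ∀ k : ℕ, 1 ≤ k → k ≤ N → F k ω ≤ T} := by
  set S := {ω | ∀ k : ℕ, 1 ≤ k → k ≤ N → F k ω ≤ T} with hS
  have hSm : MeasurableSet S := by
    have : S = ⋂ k : ℕ, ⋂ (_ : 1 ≤ k), ⋂ (_ : k ≤ N), {ω | F k ω ≤ T} := by
      ext ω; simp [hS]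
    rw [this]
    exact MeasurableSet.iInter fun k => MeasurableSet.iInter fun _ => MeasurableSet.iInter fun _ =>
      measurableSet_le (hF k) measurable_const
  have hsub : Sᶜ ⊆ ⋃ k ∈ Finset.Icc 1 N, {ω | T ≤ F k ω} := by
    intro ω hω
    simp only [hS, Set.mem_compl_iff, Set.mem_ofPred_eq, not_forall, not_le] at hω
    obtain ⟨k, h1, h2, h3⟩ := hω
    simp only [Set.mem_iUnion]
    exact ⟨k, Finset.mem_Icc.mpr ⟨h1, h2⟩, h3.le⟩
  have h1 : P.real Sᶜ ≤ N * b := by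
    refine (measureReal_mono hsub (measure_ne_top _ _)).trans ?_
    refine (measureReal_biUnion_finset_le _ _).trans ?_
    refine (Finset.sum_le_sum (fun k hk => hb k (Finset.mem_Icc.mp hk).1)).trans ?_
    simp
  have := probReal_compl_eq_one_sub (μ := P) hSm
  linarith

/-- in the thresholding allocation model, if `OptEnvy ≤ -Δ`,
`q ≤ (1/2) m³/Δ²` and `q ≤ m²/(log m)²`, then with probability at least
`1 − 2 m⁶ exp(−(3/10)(log m)²)`, simultaneously for all grid values `c = k/m³`
(`k = 1, …, m⁶`), `f(c) ≤ −(1/5) m^{−3/2} q^{1/2} Δ² + (m/√q) log m`. -/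
theorem stmt11 {m : ℕ} (μa μb : Fin m → ℝ)
    (hμa : ∀ i, μa i ∈ Set.Icc (0 : ℝ) 1) (hμb : ∀ i, μb i ∈ Set.Icc (0 : ℝ) 1)
    (Δ : ℝ) (hΔ : 0 < Δ) (hopt : optEnvy μa μb ≤ -Δ)
    (q : ℕ) (hq1 : 1 ≤ q) (hq2 : (q : ℝ) ≤ 1 / 2 * m ^ 3 / Δ ^ 2)
    (hq3 : (q : ℝ) ≤ m ^ 2 / Real.log m ^ 2) :
    ENNReal.ofReal (1 - 2 * m ^ 6 * Real.exp (-(3 / 10) * Real.log m ^ 2)) ≤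
      threshMeasure m q μa μb
        {ω | ∀ k : ℕ, 1 ≤ k → k ≤ m ^ 6 →
            fFun μa μb ((k : ℝ) / (m : ℝ) ^ 3) ω ≤
              -(1 / 5) * (m : ℝ) ^ (-(3 : ℝ) / 2) * (q : ℝ) ^ ((1 : ℝ) / 2) * Δ ^ 2 +
                (m / Real.sqrt q) * Real.log m} := by
  have hm2 : 2 ≤ m := by
    by_contra h
    have hqr : (1:ℝ) ≤ q := by exact_mod_cast hq1
    interval_cases m
    · norm_num at hq3; linarith
    · norm_num at hq3; linarith
  have hP : IsProbabilityMeasure (threshMeasure m q μa μb) := by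
    unfold threshMeasure; infer_instance
  have hmpos : (0:ℝ) < m := by positivity
  have hrp : (m : ℝ) ^ (-(3 : ℝ) / 2) * (q : ℝ) ^ ((1 : ℝ) / 2) * Δ ^ 2
      = √q * Δ^2 / (m * √m) := by
    have e1 : (m : ℝ) ^ (-(3 : ℝ) / 2) = (m * √m)⁻¹ := by
      rw [Real.sqrt_eq_rpow, neg_div, Real.rpow_neg hmpos.le]
      congr 1
      rw [show (3:ℝ)/2 = 1 + 1/2 by norm_num, Real.rpow_add hmpos, Real.rpow_one]
    rw [e1, ← Real.sqrt_eq_rpow]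
    field_simp
  have hT : -(1 / 5) * (m : ℝ) ^ (-(3 : ℝ) / 2) * (q : ℝ) ^ ((1 : ℝ) / 2) * Δ ^ 2 +
                (m / Real.sqrt q) * Real.log m =
      -(1/5 * (√q * Δ^2 / (m * √m))) + (m / √q) * Real.log m := by
    rw [← hrp]; ring
  rw [hT]
  have hU := aux_union (threshMeasure m q μa μb)
    (fun k => fFun μa μb ((k : ℝ) / (m : ℝ) ^ 3)) (fun k => aux_meas μa μb _) (m ^ 6) _ _
    (fun k hk => aux_single μa μb hμa hμb Δ hΔ hopt q hq1 hq2 hq3 hm2 ((k : ℝ) / (m : ℝ) ^ 3)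
      (by positivity))
  have hSr : 1 - 2 * (m : ℝ) ^ 6 * Real.exp (-(3 / 10) * Real.log m ^ 2) ≤
      1 - ((m ^ 6 : ℕ) : ℝ) * Real.exp (-(3 / 10) * Real.log m ^ 2) := by
    have h0 : 0 ≤ (m:ℝ)^6 * Real.exp (-(3 / 10) * Real.log m ^ 2) := by positivity
    rw [Nat.cast_pow]
    linarith
  refine (ENNReal.ofReal_le_ofReal (hSr.trans hU)).trans ?_
  rw [ofReal_measureReal]
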